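/- For probability measures μ₁,…,μₙ on ℝ and t ∈ [0,1), the supremum of q⁺_t over Λ(μ₁,…,μₙ) is attained: there exists ν₊ ∈ Λ(μ₁,…,μₙ) such that q⁺_t(ν₊) = sup_{ν ∈ Λ(μ₁,…,μₙ)} q⁺_t(ν). -/

import Mathlib

/-!
The couplings of `μ₁,…,μₙ` form a compact set for weak convergence: they are tight because a
product of compacts carrying most of the mass of each marginal carries most of the mass of any
coupling (then Prokhorov), and they are closed because taking a marginal is continuous. For a
probability measure `ν`, having all its quantile points `{x | t < ν(-∞,x]}` at or above `s` means
that `ν(-∞,x) ≤ t` for every `x < s`, and each such condition is closed by the portmanteau theorem.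
If `s` is the supremum, each single condition is met by some coupling, so by compactness and
nesting some coupling meets all of them; its sum has right quantile at least `s`, hence equal
to `s`. Tightness also gives that the right quantiles are bounded above.

For `t = 0` the set `{x | 0 < ν(-∞,x]}` may be unbounded below, and then `rightQuantile ν 0` is the
junk value `0`. If `s` is not attained, then such a `ν` forces `0 < s`; so couplings whose
quantile exceeds a level in `[0, s)` have a genuine quantile, and the argument above still applies.
-/

open MeasureTheory Set
open scoped ENNReal

noncomputable section

/-- Left quantile `q⁻_t(μ) = inf {x | μ(-∞,x] ≥ t}`. -/
def leftQuantile (μ : MeasureTheory.Measure ℝ) (t : ℝ) : ℝ :=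
  sInf {x : ℝ | t ≤ (μ (Set.Iic x)).toReal}

/-- Right quantile `q⁺_t(μ) = inf {x | μ(-∞,x] > t}`. -/
def rightQuantile (μ : MeasureTheory.Measure ℝ) (t : ℝ) : ℝ :=
  sInf {x : ℝ | t < (μ (Set.Iic x)).toReal}

/-- Range Value-at-Risk `R_{β,α}(μ) = (1/α) ∫_β^{β+α} q⁺_{1-t}(μ) dt`. -/
def RVaR (β α : ℝ) (μ : MeasureTheory.Measure ℝ) : ℝ :=
  α⁻¹ * ∫ t in β..(β + α), rightQuantile μ (1 - t)

/-- `Λ(μ₁,…,μₙ)`: the set of distributions of `X₁ + ⋯ + Xₙ` over all random vectors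
with marginals `μ₁,…,μₙ`, i.e. pushforwards under the sum map of joint laws on `Fin n → ℝ`
whose one-dimensional marginals are the `μᵢ`. -/
def AggSet {n : ℕ} (μs : Fin n → MeasureTheory.Measure ℝ) :
    Set (MeasureTheory.Measure ℝ) :=
  {ν | ∃ π : MeasureTheory.Measure (Fin n → ℝ), MeasureTheory.IsProbabilityMeasure π ∧
      (∀ i, π.map (fun x => x i) = μs i) ∧
      ν = π.map (fun x => ∑ i, x i)}

/-- The `t`-tail distribution `μ^{t+}`: the law of `q⁻_U(μ)` for `U` uniform on `[t,1]`;
its cdf is `x ↦ max ((μ(-∞,x] - t)/(1-t), 0)`. -/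
def upperTail (μ : MeasureTheory.Measure ℝ) (t : ℝ) : MeasureTheory.Measure ℝ :=
  ((ENNReal.ofReal (1 - t))⁻¹ • MeasureTheory.volume.restrict (Set.Ioc t 1)).map
    (leftQuantile μ)

/-- The lower `t`-tail distribution `μ^{t-}`: the law of `q⁻_U(μ)` for `U` uniform on `[0,t]`;
its cdf is `x ↦ min (μ(-∞,x]/t, 1)`. -/
def lowerTail (μ : MeasureTheory.Measure ℝ) (t : ℝ) : MeasureTheory.Measure ℝ :=
  ((ENNReal.ofReal t)⁻¹ • MeasureTheory.volume.restrict (Set.Ioc 0 t)).map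
    (leftQuantile μ)

/-- `μ` is absolutely continuous with a density that is decreasing on its support. -/
def HasDecreasingDensity (μ : MeasureTheory.Measure ℝ) : Prop :=
  ∃ f : ℝ → ℝ, (∀ x, 0 ≤ f x) ∧
    μ = MeasureTheory.volume.withDensity (fun x => ENNReal.ofReal (f x)) ∧
    AntitoneOn f (Function.support f)

/-- `μ` is absolutely continuous with a density that is increasing on its support. -/
def HasIncreasingDensity (μ : MeasureTheory.Measure ℝ) : Prop :=
  ∃ f : ℝ → ℝ, (∀ x, 0 ≤ f x) ∧
    μ = MeasureTheory.volume.withDensity (fun x => ENNReal.ofReal (f x)) ∧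
    MonotoneOn f (Function.support f)

/-- `μ` admits a decreasing density beyond its `t`-quantile. -/
def DecreasingDensityBeyond (μ : MeasureTheory.Measure ℝ) (t : ℝ) : Prop :=
  HasDecreasingDensity (upperTail μ t)

/-- `μ` admits an increasing density beyond its `t`-quantile. -/
def IncreasingDensityBeyond (μ : MeasureTheory.Measure ℝ) (t : ℝ) : Prop :=
  HasIncreasingDensity (upperTail μ t)

/-- `μ` admits an increasing density below its `t`-quantile. -/
def IncreasingDensityBelow (μ : MeasureTheory.Measure ℝ) (t : ℝ) : Prop :=
  HasIncreasingDensity (lowerTail μ t)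

/-- `μ` admits a decreasing density below its `t`-quantile. -/
def DecreasingDensityBelow (μ : MeasureTheory.Measure ℝ) (t : ℝ) : Prop :=
  HasDecreasingDensity (lowerTail μ t)

/-- `(μ₁,…,μₙ)` is jointly mixable: some point mass `δ_C` belongs to `Λ(μ₁,…,μₙ)`. -/
def JointlyMixable {n : ℕ} (μs : Fin n → MeasureTheory.Measure ℝ) : Prop :=
  ∃ C : ℝ, MeasureTheory.Measure.dirac C ∈ AggSet μs

open Filter Topology

/-- The set of couplings of `μs`: joint laws with the prescribed one-dimensional marginals. -/
def couplings {n : ℕ} (μs : Fin n → Measure ℝ) : Set (ProbabilityMeasure (Fin n → ℝ)) :=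
  {π | ∀ i, (π : Measure (Fin n → ℝ)).map (fun x => x i) = μs i}

lemma mem_aggSet_iff {n : ℕ} {μs : Fin n → Measure ℝ} {ν : Measure ℝ} :
    ν ∈ AggSet μs ↔
      ∃ π ∈ couplings μs, ν = (π : Measure (Fin n → ℝ)).map (fun x => ∑ i, x i) := by
  constructor
  · rintro ⟨π, hπ, h1, h2⟩
    exact ⟨⟨π, hπ⟩, h1, h2⟩
  · rintro ⟨π, h1, h2⟩
    exact ⟨π, inferInstance, h1, h2⟩

lemma measurable_sum_coord (n : ℕ) : Measurable (fun x : Fin n → ℝ => ∑ i, x i) := by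
  fun_prop

lemma tight_couplings {n : ℕ} (μs : Fin n → Measure ℝ) (hprob : ∀ i, IsProbabilityMeasure (μs i)) :
    IsTightMeasureSet {((π : ProbabilityMeasure (Fin n → ℝ)) : Measure (Fin n → ℝ)) |
      π ∈ couplings μs} := by
  rw [isTightMeasureSet_iff_exists_isCompact_measure_compl_le]
  intro ε hε
  -- For `n = 0` the quotient `ε / n` is `⊤`, which is harmless since there are no coordinates.
  have hε' : 0 < ε / (n : ℝ≥0∞) := ENNReal.div_pos hε.ne' (ENNReal.natCast_ne_top n)
  have A (i : Fin n) : ∃ K : Set ℝ, IsCompact K ∧ μs i Kᶜ ≤ ε / (n : ℝ≥0∞) := by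
    have := hprob i
    obtain ⟨K, hK, h⟩ := isTightMeasureSet_iff_exists_isCompact_measure_compl_le.1
      (isTightMeasureSet_singleton (μ := μs i)) _ hε'
    exact ⟨K, hK, h _ rfl⟩
  choose K hK hμK using A
  refine ⟨Set.univ.pi K, isCompact_univ_pi hK, ?_⟩
  rintro _ ⟨π, hπ, rfl⟩
  have hsub : (Set.univ.pi K)ᶜ ⊆ ⋃ i, (fun x : Fin n → ℝ => x i) ⁻¹' (K i)ᶜ := by
    intro x hx
    simpa [Set.mem_pi] using hx
  calc (π : Measure (Fin n → ℝ)) (Set.univ.pi K)ᶜ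
      ≤ ∑ i, (π : Measure (Fin n → ℝ)) ((fun x : Fin n → ℝ => x i) ⁻¹' (K i)ᶜ) :=
        (measure_mono hsub).trans (measure_iUnion_fintype_le _ _)
    _ ≤ ∑ _i : Fin n, ε / (n : ℝ≥0∞) := by
        refine Finset.sum_le_sum fun i _ => ?_
        rw [← Measure.map_apply (measurable_pi_apply i) (hK i).measurableSet.compl, hπ i]
        exact hμK i
    _ ≤ ε := by
        rw [Finset.sum_const, Finset.card_univ, Fintype.card_fin, nsmul_eq_mul]
        exact ENNReal.mul_div_le

lemma isCompact_couplings {n : ℕ} (μs : Fin n → Measure ℝ)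
    (hprob : ∀ i, IsProbabilityMeasure (μs i)) : IsCompact (couplings μs) := by
  have hcl : IsClosed (couplings μs) := by
    have : couplings μs = ⋂ i, {π : ProbabilityMeasure (Fin n → ℝ) |
        π.map (measurable_pi_apply i).aemeasurable = ⟨μs i, hprob i⟩} := by
      ext π
      simp only [couplings, Set.mem_ofPred_eq, Set.mem_iInter]
      refine forall_congr' fun i => ?_
      exact ⟨fun h => Subtype.ext h, fun h => congrArg Subtype.val h⟩
    rw [this]
    exact isClosed_iInter fun i =>
      isClosed_eq (ProbabilityMeasure.continuous_map (continuous_apply i)) continuous_const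
  have h := isCompact_closure_of_isTightMeasureSet (tight_couplings μs hprob)
  rwa [hcl.closure_eq] at h

/-- Bounding the mass of an open set from above is a closed condition for weak convergence. -/
lemma isClosed_measure_open_le {Ω : Type*} [MeasurableSpace Ω] [TopologicalSpace Ω]
    [OpensMeasurableSpace Ω] [HasOuterApproxClosed Ω] {G : Set Ω} (hG : IsOpen G) (c : ℝ≥0∞) :
    IsClosed {π : ProbabilityMeasure Ω | (π : Measure Ω) G ≤ c} := by
  rw [isClosed_iff_forall_filter]
  intro π F hF hFs hFπ
  have h := ProbabilityMeasure.le_liminf_measure_open_of_tendsto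
    (μs := fun π : ProbabilityMeasure Ω => π) (tendsto_id'.2 hFπ) hG
  refine h.trans ?_
  refine liminf_le_of_frequently_le' ?_
  exact Eventually.frequently (Filter.le_principal_iff.1 hFs)

/-- By tightness, one level `M` lies in the set defining the right quantile of every aggregate law. -/
lemma exists_level {n : ℕ} (μs : Fin n → Measure ℝ) (hprob : ∀ i, IsProbabilityMeasure (μs i))
    {t : ℝ} (ht : t ∈ Set.Ico (0 : ℝ) 1) :
    ∃ M : ℝ, ∀ ν ∈ AggSet μs, t < (ν (Set.Iic M)).toReal := by
  obtain ⟨K, hK, hKε⟩ := isTightMeasureSet_iff_exists_isCompact_measure_compl_le.1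
    (tight_couplings μs hprob) (ENNReal.ofReal ((1 - t) / 2))
    (ENNReal.ofReal_pos.2 (by linarith [ht.2]))
  obtain ⟨M, hM⟩ := (hK.image (f := fun x : Fin n → ℝ => ∑ i, x i) (by fun_prop)).bddAbove
  refine ⟨M, fun ν hν => ?_⟩
  obtain ⟨π, hπ, rfl⟩ := mem_aggSet_iff.1 hν
  rw [Measure.map_apply (measurable_sum_coord n) measurableSet_Iic]
  have h1 : (π : Measure (Fin n → ℝ)).real Kᶜ ≤ (1 - t) / 2 :=
    ENNReal.toReal_le_of_le_ofReal (by linarith [ht.2]) (hKε _ ⟨π, hπ, rfl⟩)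
  rw [probReal_compl_eq_one_sub hK.measurableSet] at h1
  have h2 : (π : Measure (Fin n → ℝ)).real K ≤
      (π : Measure (Fin n → ℝ)).real ((fun x : Fin n → ℝ => ∑ i, x i) ⁻¹' Set.Iic M) :=
    measureReal_mono fun x hx => hM ⟨x, hx, rfl⟩
  change t < (π : Measure (Fin n → ℝ)).real _
  linarith [ht.2]

/-- A level strictly below a right quantile that is not the junk value has at most mass `t`
strictly below it. -/
lemma measure_Iio_le_of_lt_rightQuantile {ν : Measure ℝ} [IsProbabilityMeasure ν] {t x : ℝ}
    (ht : 0 ≤ t) (hb : BddBelow {x : ℝ | t < (ν (Set.Iic x)).toReal})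
    (hx : x < rightQuantile ν t) : ν (Set.Iio x) ≤ ENNReal.ofReal t := by
  refine (measure_mono Set.Iio_subset_Iic_self).trans ?_
  rw [ENNReal.le_ofReal_iff_toReal_le (measure_ne_top _ _) ht]
  exact not_lt.1 fun h => (csInf_le hb h).not_gt hx

lemma le_rightQuantile {ν : Measure ℝ} [IsProbabilityMeasure ν] {t s : ℝ} (ht : 0 ≤ t)
    (hne : {x : ℝ | t < (ν (Set.Iic x)).toReal}.Nonempty)
    (h : ∀ x < s, ν (Set.Iio x) ≤ ENNReal.ofReal t) : s ≤ rightQuantile ν t := by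
  refine le_csInf hne fun y hy => ?_
  by_contra! hys
  obtain ⟨x, hyx, hxs⟩ := exists_between hys
  have h1 : ν (Set.Iic y) ≤ ENNReal.ofReal t :=
    (measure_mono (Set.Iic_subset_Iio.2 hyx)).trans (h x hxs)
  exact (ENNReal.toReal_le_of_le_ofReal ht h1).not_gt hy

/-- Proposition 4.2: the worst-case quantile aggregation value is
attained: there exists `ν₊ ∈ Λ(μ₁,…,μₙ)` with
`q⁺_t(ν₊) = sup_{ν ∈ Λ(μ₁,…,μₙ)} q⁺_t(ν)`. -/
theorem worst_case_quantile_attained {n : ℕ}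
    (μs : Fin n → MeasureTheory.Measure ℝ)
    (hprob : ∀ i, MeasureTheory.IsProbabilityMeasure (μs i))
    (t : ℝ) (ht : t ∈ Set.Ico (0 : ℝ) 1) :
    ∃ ν ∈ AggSet μs,
      rightQuantile ν t = sSup ((fun ν' => rightQuantile ν' t) '' AggSet μs) := by
  obtain ⟨M, hM⟩ := exists_level μs hprob ht
  have hP : ∀ ν ∈ AggSet μs, IsProbabilityMeasure ν := by
    rintro ν ⟨π, hπ, -, rfl⟩
    exact Measure.isProbabilityMeasure_map (measurable_sum_coord n).aemeasurable
  -- The product measure is a coupling.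
  have hne : (AggSet μs).Nonempty :=
    ⟨_, Measure.pi μs, inferInstance, fun i => (measurePreserving_eval μs i).map_eq, rfl⟩
  have hjunk : ∀ ν : Measure ℝ, ¬ BddBelow {x : ℝ | t < (ν (Set.Iic x)).toReal} →
      rightQuantile ν t = 0 := fun ν h => Real.sInf_of_not_bddBelow h
  have hbdd : BddAbove ((fun ν' => rightQuantile ν' t) '' AggSet μs) := by
    refine ⟨max M 0, ?_⟩
    rintro _ ⟨ν, hν, rfl⟩
    by_cases hb : BddBelow {x : ℝ | t < (ν (Set.Iic x)).toReal}
    · exact (csInf_le hb (hM ν hν)).trans (le_max_left _ _)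
    · exact (hjunk ν hb).le.trans (le_max_right _ _)
  set s := sSup ((fun ν' => rightQuantile ν' t) '' AggSet μs) with hs
  have hle : ∀ ν ∈ AggSet μs, rightQuantile ν t ≤ s := fun ν hν => le_csSup hbdd ⟨ν, hν, rfl⟩
  by_contra! hcon
  have hlt : ∀ ν ∈ AggSet μs, rightQuantile ν t < s := fun ν hν => (hle ν hν).lt_of_ne (hcon ν hν)
  have hgt : ∀ x < s, ∃ ν ∈ AggSet μs, x < rightQuantile ν t := by
    intro x hx
    obtain ⟨_, ⟨ν, hν, rfl⟩, h⟩ := exists_lt_of_lt_csSup (hne.image _) hx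
    exact ⟨ν, hν, h⟩
  have hlevel : ∀ x < s, ∃ ν ∈ AggSet μs, ν (Set.Iio x) ≤ ENNReal.ofReal t := by
    intro x hx
    obtain ⟨ν, hν, hxν⟩ := hgt x hx
    by_cases hb : BddBelow {x : ℝ | t < (ν (Set.Iic x)).toReal}
    · have := hP ν hν
      exact ⟨ν, hν, measure_Iio_le_of_lt_rightQuantile ht.1 hb hxν⟩
    -- The junk value `0` is below `s`, so some other law has a positive, hence genuine, quantile.
    · have hs0 : 0 < s := hjunk ν hb ▸ hlt ν hν
      obtain ⟨ν', hν', h'⟩ := hgt (max x 0) (max_lt hx hs0)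
      have hb' : BddBelow {x : ℝ | t < (ν' (Set.Iic x)).toReal} := by
        by_contra hb'
        rw [hjunk ν' hb'] at h'
        exact (le_max_right x 0).not_gt h'
      have := hP ν' hν'
      exact ⟨ν', hν', measure_Iio_le_of_lt_rightQuantile ht.1 hb' ((le_max_left x 0).trans_lt h')⟩
  let C : Set.Iio s → Set (ProbabilityMeasure (Fin n → ℝ)) := fun x =>
    couplings μs ∩ {π | (π : Measure (Fin n → ℝ))
      ((fun y : Fin n → ℝ => ∑ i, y i) ⁻¹' Set.Iio (x : ℝ)) ≤ ENNReal.ofReal t}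
  have hclosed : ∀ x : Set.Iio s, IsClosed {π : ProbabilityMeasure (Fin n → ℝ) |
      (π : Measure (Fin n → ℝ))
      ((fun y : Fin n → ℝ => ∑ i, y i) ⁻¹' Set.Iio (x : ℝ)) ≤ ENNReal.ofReal t} := fun x =>
    isClosed_measure_open_le (isOpen_Iio.preimage (by fun_prop)) _
  have hCc : ∀ x, IsCompact (C x) := fun x =>
    (isCompact_couplings μs hprob).inter_right (hclosed x)
  have hanti : Antitone C := fun x y hxy =>
    Set.inter_subset_inter_right _ fun π hπ =>
      le_trans
        (b := (π : Measure (Fin n → ℝ)) ((fun z : Fin n → ℝ => ∑ i, z i) ⁻¹' Set.Iio (y : ℝ)))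
        (measure_mono (Set.preimage_mono (Set.Iio_subset_Iio hxy))) hπ
  have hCne : ∀ x, (C x).Nonempty := by
    rintro ⟨x, hx⟩
    obtain ⟨ν, hν, h⟩ := hlevel x hx
    obtain ⟨π, hπ, rfl⟩ := mem_aggSet_iff.1 hν
    rw [Measure.map_apply (measurable_sum_coord n) measurableSet_Iio] at h
    exact ⟨π, hπ, h⟩
  have : Nonempty (Set.Iio s) := Set.nonempty_Iio.to_subtype
  obtain ⟨π, hπ⟩ := IsCompact.nonempty_iInter_of_directed_nonempty_isCompact_isClosed C
    hanti.directed_ge hCne hCc (fun x => (hCc x).isClosed)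
  rw [Set.mem_iInter] at hπ
  have hν := mem_aggSet_iff.2 ⟨π, (hπ (Classical.arbitrary _)).1, rfl⟩
  have := hP _ hν
  refine (hlt _ hν).not_ge (le_rightQuantile ht.1 ⟨M, hM _ hν⟩ fun x hx => ?_)
  rw [Measure.map_apply (measurable_sum_coord n) measurableSet_Iio]
  exact (hπ ⟨x, hx⟩).2

end
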